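/- arXiv:2009.11479 — 7 statements merged into one kernel-verified Lean document; each statement's English description precedes it below -/
import Mathlib

section
/- Let p ≥ 1 be an integer and define h_p : ℝ → ℝ by h_p(x) = max(0, p·x) + Σ_{i=2}^{p} (−1)^{i−1}·max(0, 2p·x − 2(i−1)). Then for every integer t with 0 ≤ t ≤ p − 1 and every x ∈ [t/p, (t+1)/p]: if t is even then h_p(x) = p·x − t, and if t is odd then h_p(x) = t + 1 − p·x. -/
/-- The one-dimensional sawtooth map from the proof of Lemma 2:
`h_p(x) = max(0, p·x) + Σ_{i=2}^{p} (−1)^{i−1} · max(0, 2p·x − 2(i−1))`. -/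
noncomputable def sawtooth (p : ℕ) (x : ℝ) : ℝ :=
  max 0 (p * x) + ∑ i ∈ Finset.Icc 2 p, (-1 : ℝ) ^ (i - 1) * max 0 (2 * p * x - 2 * ((i : ℝ) - 1))

theorem sawtooth_sum_aux (y : ℝ) (t : ℕ) :
    ∑ i ∈ Finset.Icc 2 (t + 1), (-1 : ℝ) ^ (i - 1) * (2 * y - 2 * ((i : ℝ) - 1))
      = (1 - 2 * y) / 2 + (-1 : ℝ) ^ t * ((2 * y - 1) / 2 - t) := by
  induction t with
  | zero => simp; ring
  | succ n ih =>
    rw [Finset.sum_Icc_succ_top (by omega), ih]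
    simp only [Nat.add_sub_cancel]
    push_cast
    ring

/-- On each interval `[t/p, (t+1)/p]` (for `0 ≤ t ≤ p−1`) the sawtooth `h_p` is affine:
`h_p(x) = p·x − t` if `t` is even and `h_p(x) = t + 1 − p·x` if `t` is odd. -/
theorem sawtooth_affine_on_pieces (p : ℕ) (hp : 1 ≤ p) :
    ∀ t : ℕ, t ≤ p - 1 → ∀ x ∈ Set.Icc ((t : ℝ) / p) (((t : ℝ) + 1) / p),
      (Even t → sawtooth p x = p * x - t) ∧ (Odd t → sawtooth p x = t + 1 - p * x) := by
  intro t ht x hx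
  have hp0 : (0 : ℝ) < p := by exact_mod_cast hp
  obtain ⟨h1, h2⟩ := hx
  rw [div_le_iff₀ hp0] at h1
  rw [le_div_iff₀ hp0] at h2
  have ht0 : (0 : ℝ) ≤ t := Nat.cast_nonneg t
  have key : sawtooth p x = p * x + ((1 - 2 * (p * x)) / 2
      + (-1 : ℝ) ^ t * ((2 * (p * x) - 1) / 2 - t)) := by
    rw [← sawtooth_sum_aux, sawtooth, max_eq_right (by linarith)]
    congr 1
    symm
    have hsub : Finset.Icc 2 (t + 1) ⊆ Finset.Icc 2 p :=
      Finset.Icc_subset_Icc_right (by omega)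
    rw [← Finset.sum_subset hsub]
    · refine Finset.sum_congr rfl fun i hi => ?_
      have hi' : (i : ℝ) ≤ t + 1 := by exact_mod_cast (Finset.mem_Icc.1 hi).2
      rw [max_eq_right (by linarith)]
      ring
    · intro i hi hn
      have hi' : (t : ℝ) + 2 ≤ i := by
        simp only [Finset.mem_Icc] at hi hn
        have : t + 2 ≤ i := by omega
        exact_mod_cast this
      rw [max_eq_left (by linarith), mul_zero]
  rw [key]
  constructor
  · intro h
    rw [h.neg_one_pow]; ring
  · intro h
    rw [h.neg_one_pow]; ring
end

section
/- Let p ≥ 1 be an integer and define h_p : ℝ → ℝ by h_p(x) = max(0, p·x) + Σ_{i=2}^{p} (−1)^{i−1}·max(0, 2p·x − 2(i−1)). Then for every integer t with 0 ≤ t ≤ p − 1, the image of the interval [t/p, (t+1)/p] under h_p equals [0, 1]; in particular, h_p maps [0, 1] onto [0, 1]. -/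
lemma saw_sum (t : ℕ) (y : ℝ) :
    y + ∑ i ∈ Finset.Icc 2 (t + 1), (-1 : ℝ) ^ (i - 1) * (2 * y - 2 * ((i : ℝ) - 1))
      = (-1 : ℝ) ^ t * (y - t) + (1 - (-1 : ℝ) ^ t) / 2 := by
  induction t with
  | zero => simp
  | succ t ih =>
    rw [Finset.sum_Icc_succ_top (by omega), ← add_assoc, ih]
    have : t + 1 + 1 - 1 = t + 1 := by omega
    rw [this, pow_succ]
    push_cast
    ring

lemma saw_eq (p t : ℕ) (ht : t + 1 ≤ p) (x : ℝ) (h1 : (t : ℝ) ≤ p * x) (h2 : p * x ≤ t + 1) :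
    sawtooth p x = (-1 : ℝ) ^ t * (p * x - t) + (1 - (-1 : ℝ) ^ t) / 2 := by
  rw [← saw_sum, sawtooth]
  have h0 : (0 : ℝ) ≤ t := Nat.cast_nonneg t
  rw [max_eq_right (h0.trans h1)]
  congr 1
  symm
  have hsub : Finset.Icc 2 (t + 1) ⊆ Finset.Icc 2 p := Finset.Icc_subset_Icc_right ht
  rw [← Finset.sum_subset hsub (f := fun i : ℕ =>
    (-1 : ℝ) ^ (i - 1) * max 0 (2 * p * x - 2 * ((i : ℝ) - 1)))]
  · apply Finset.sum_congr rfl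
    intro i hi
    have hi' : (i : ℝ) ≤ t + 1 := by exact_mod_cast (Finset.mem_Icc.1 hi).2
    rw [max_eq_right (by linarith)]
    ring
  · intro i hi hn
    have hi' : (t : ℝ) + 2 ≤ i := by
      have : t + 2 ≤ i := by
        simp only [Finset.mem_Icc] at hi hn
        omega
      exact_mod_cast this
    rw [max_eq_left (by linarith), mul_zero]

lemma saw_piece (p t : ℕ) (ht : t + 1 ≤ p) :
    sawtooth p '' Set.Icc ((t : ℝ) / p) (((t : ℝ) + 1) / p) = Set.Icc (0 : ℝ) 1 := by
  have hp : (0 : ℝ) < p := by exact_mod_cast (by omega : 0 < p)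
  have key : ∀ x : ℝ, x ∈ Set.Icc ((t : ℝ) / p) (((t : ℝ) + 1) / p) ↔
      (t : ℝ) ≤ p * x ∧ p * x ≤ t + 1 := by
    intro x
    rw [Set.mem_Icc, div_le_iff₀ hp, le_div_iff₀ hp, mul_comm x]
  ext z
  simp only [Set.mem_image, key, Set.mem_Icc]
  constructor
  · rintro ⟨x, ⟨h1, h2⟩, rfl⟩
    rw [saw_eq p t ht x h1 h2]
    rcases neg_one_pow_eq_or ℝ t with h | h <;> rw [h] <;> constructor <;> linarith
  · rintro ⟨h1, h2⟩
    rcases neg_one_pow_eq_or ℝ t with h | h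
    · have e : (p : ℝ) * ((t + z) / p) = t + z := by field_simp
      refine ⟨(t + z) / p, ⟨by linarith, by linarith⟩, ?_⟩
      rw [saw_eq p t ht _ (by linarith) (by linarith), e, h]
      ring
    · have e : (p : ℝ) * ((t + 1 - z) / p) = t + 1 - z := by field_simp
      refine ⟨(t + 1 - z) / p, ⟨by linarith, by linarith⟩, ?_⟩
      rw [saw_eq p t ht _ (by linarith) (by linarith), e, h]
      ring

/-- The sawtooth `h_p` identifies each of its linear regions `[t/p, (t+1)/p]`
(for `0 ≤ t ≤ p−1`) onto the common image `[0, 1]`; in particular it maps `[0,1]` onto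
`[0,1]`. -/
theorem sawtooth_image_pieces (p : ℕ) (hp : 1 ≤ p) :
    (∀ t : ℕ, t ≤ p - 1 →
      sawtooth p '' Set.Icc ((t : ℝ) / p) (((t : ℝ) + 1) / p) = Set.Icc (0 : ℝ) 1) ∧
    sawtooth p '' Set.Icc (0 : ℝ) 1 = Set.Icc (0 : ℝ) 1 := by
  refine ⟨fun t ht => saw_piece p t (by omega), ?_⟩
  have hp0 : (0 : ℝ) < p := by exact_mod_cast hp
  have hp1 : (1 : ℝ) ≤ p := by exact_mod_cast hp
  apply Set.Subset.antisymm
  · rintro _ ⟨x, ⟨h0, h1⟩, rfl⟩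
    have hx0 : 0 ≤ (p : ℝ) * x := by positivity
    have : ∃ t : ℕ, t + 1 ≤ p ∧ (t : ℝ) ≤ p * x ∧ p * x ≤ t + 1 := by
      rcases h1.lt_or_eq with h | h
      · refine ⟨⌊(p : ℝ) * x⌋₊, ?_, Nat.floor_le hx0, (Nat.lt_floor_add_one _).le⟩
        have : ⌊(p : ℝ) * x⌋₊ < p := (Nat.floor_lt hx0).2 (by nlinarith)
        omega
      · refine ⟨p - 1, by omega, ?_, ?_⟩ <;> rw [h, Nat.cast_sub hp] <;> simp
    obtain ⟨t, ht, ha, hb⟩ := this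
    rw [← saw_piece p t ht]
    refine ⟨x, ⟨?_, ?_⟩, rfl⟩
    · rw [div_le_iff₀ hp0]; linarith
    · rw [le_div_iff₀ hp0]; linarith
  · refine (saw_piece p 0 (by omega)).symm.subset.trans ?_
    apply Set.image_mono
    apply Set.Icc_subset_Icc
    · simp
    · rw [div_le_one hp0]
      simpa using hp1
end

section
/- Let p ≥ 1 and k ≥ 1 be integers and define h_p : ℝ → ℝ by h_p(x) = max(0, p·x) + Σ_{i=2}^{p} (−1)^{i−1}·max(0, 2p·x − 2(i−1)). Let h_p^[k] denote the k-fold composition of h_p with itself. Then for every integer t with 0 ≤ t ≤ p^k − 1 and every x ∈ [t/p^k, (t+1)/p^k]: if t is even then h_p^[k](x) = p^k·x − t, and if t is odd then h_p^[k](x) = t + 1 − p^k·x. -/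
lemma saw_sum_s7 (s : ℕ) (P : ℝ) (h : (s : ℝ) ≤ P) :
    P + ∑ j ∈ Finset.range s, (-1 : ℝ) ^ (j + 1) * max 0 (2 * P - 2 * ((j : ℝ) + 1))
      = 1 / 2 + (-1 : ℝ) ^ s * (P - s - 1 / 2) := by
  induction s with
  | zero => simp
  | succ n ih =>
    push_cast at h
    rw [Finset.sum_range_succ, ← add_assoc, ih (by linarith), max_eq_right (by linarith)]
    push_cast
    ring

lemma saw_sum_ext (s d : ℕ) (P : ℝ) (h : P ≤ s + 1) :
    ∑ j ∈ Finset.range (s + d), (-1 : ℝ) ^ (j + 1) * max 0 (2 * P - 2 * ((j : ℝ) + 1))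
      = ∑ j ∈ Finset.range s, (-1 : ℝ) ^ (j + 1) * max 0 (2 * P - 2 * ((j : ℝ) + 1)) := by
  induction d with
  | zero => simp
  | succ n ih =>
    have h0 : (0 : ℝ) ≤ n := n.cast_nonneg
    rw [← add_assoc, Finset.sum_range_succ, ih, max_eq_left (by push_cast; linarith)]
    simp

lemma saw_piece_s7 (p s : ℕ) (hs : s < p) (x : ℝ) (h1 : (s : ℝ) ≤ p * x) (h2 : p * x ≤ s + 1) :
    sawtooth p x = 1 / 2 + (-1 : ℝ) ^ s * (p * x - s - 1 / 2) := by
  obtain ⟨d, rfl⟩ := Nat.exists_eq_add_of_lt hs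
  have h0 : (0 : ℝ) ≤ s := s.cast_nonneg
  rw [← saw_sum_s7 s _ h1, ← saw_sum_ext s d _ h2]
  unfold sawtooth
  rw [max_eq_right (by linarith)]
  congr 1
  rw [← Finset.Ico_add_one_right_eq_Icc, Finset.sum_Ico_eq_sum_range]
  apply Finset.sum_congr
  · congr 1
  · intro j _
    rw [show 2 + j - 1 = j + 1 by omega]
    push_cast
    ring_nf

lemma saw_iter (p : ℕ) (hp : 1 ≤ p) (k : ℕ) : ∀ t : ℕ, t < p ^ k → ∀ x : ℝ,
    (t : ℝ) ≤ (p : ℝ) ^ k * x → (p : ℝ) ^ k * x ≤ t + 1 →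
    (sawtooth p)^[k] x = 1 / 2 + (-1 : ℝ) ^ t * ((p : ℝ) ^ k * x - t - 1 / 2) := by
  induction k with
  | zero =>
    intro t ht x _ _
    have : t = 0 := by simpa using ht
    subst this
    simp
  | succ k ih =>
    intro t ht x h1 h2
    have hq : 0 < p ^ k := Nat.pow_pos hp
    obtain ⟨q, hqd⟩ : ∃ q, q = p ^ k := ⟨_, rfl⟩
    have hqR : (p : ℝ) ^ k = q := by rw [hqd]; push_cast; rfl
    rw [← hqd] at hq
    simp only [← hqd, hqR] at ih
    rw [pow_succ, ← hqd] at ht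
    rw [pow_succ, hqR] at h1 h2 ⊢
    rw [Function.iterate_succ_apply]
    obtain ⟨s, r, hr, rfl⟩ : ∃ s r, r < q ∧ t = q * s + r :=
      ⟨t / q, t % q, Nat.mod_lt _ hq, (Nat.div_add_mod t q).symm⟩
    have hs : s < p := by
      by_contra hc
      have := Nat.mul_le_mul_left q (not_lt.mp hc)
      omega
    have hqp : (0 : ℝ) < q := by exact_mod_cast hq
    have hr0 : (0 : ℝ) ≤ r := r.cast_nonneg
    have hr1 : (r : ℝ) + 1 ≤ q := by exact_mod_cast hr
    push_cast at h1 h2 ⊢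
    have a1 : (s : ℝ) ≤ p * x := le_of_mul_le_mul_left (by linarith) hqp
    have a2 : (p : ℝ) * x ≤ s + 1 := le_of_mul_le_mul_left (by linarith) hqp
    rw [saw_piece_s7 p s hs x a1 a2]
    rcases Nat.even_or_odd s with he | ho
    · rw [he.neg_one_pow, ih r hr _ (by linarith) (by linarith), pow_add,
        (he.mul_left q).neg_one_pow]
      ring
    · obtain ⟨r', hr'⟩ : ∃ r', q = r + r' + 1 := Nat.exists_eq_add_of_lt hr
      have hr'R : (q : ℝ) = r + r' + 1 := by exact_mod_cast hr'
      have e : (-1 : ℝ) ^ (q * s + r) = - (-1 : ℝ) ^ r' := by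
        rw [pow_add, mul_comm q s, pow_mul, ho.neg_one_pow, hr', pow_succ, pow_add]
        have : (-1 : ℝ) ^ r * (-1 : ℝ) ^ r = 1 := by rw [← mul_pow]; simp
        linear_combination (-(-1 : ℝ) ^ r') * this
      rw [ho.neg_one_pow, ih r' (by omega) _ (by linarith) (by linarith), e]
      linear_combination (-1 : ℝ) ^ r' * hr'R

/-- The `k`-fold composition of the sawtooth `h_p` with itself is the sawtooth of period
`p^k`: on each interval `[t/p^k, (t+1)/p^k]` (for `0 ≤ t ≤ p^k − 1`) it is affine, equal to
`p^k·x − t` if `t` is even and to `t + 1 − p^k·x` if `t` is odd. -/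
theorem sawtooth_iterate_affine_on_pieces (p : ℕ) (hp : 1 ≤ p) (k : ℕ) (hk : 1 ≤ k) :
    ∀ t : ℕ, t ≤ p ^ k - 1 →
      ∀ x ∈ Set.Icc ((t : ℝ) / (p : ℝ) ^ k) (((t : ℝ) + 1) / (p : ℝ) ^ k),
        (Even t → (sawtooth p)^[k] x = (p : ℝ) ^ k * x - t) ∧
        (Odd t → (sawtooth p)^[k] x = t + 1 - (p : ℝ) ^ k * x) := by
  intro t ht x hx
  have hq : 0 < p ^ k := Nat.pow_pos hp
  have hqR : (0 : ℝ) < (p : ℝ) ^ k := by exact_mod_cast hq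
  obtain ⟨h1, h2⟩ := hx
  rw [div_le_iff₀' hqR] at h1
  rw [le_div_iff₀' hqR] at h2
  rw [saw_iter p hp k t (by omega) x h1 h2]
  constructor
  · intro h
    rw [h.neg_one_pow]
    ring
  · intro h
    rw [h.neg_one_pow]
    ring
end

section
/- Let p ≥ 2 and k ≥ 1 be integers and define h_p : ℝ → ℝ by h_p(x) = max(0, p·x) + Σ_{i=2}^{p} (−1)^{i−1}·max(0, 2p·x − 2(i−1)). Let h_p^[k] denote the k-fold composition of h_p with itself, and let μ denote Lebesgue measure on ℝ. Then for every measurable set U ⊆ [0, 1] with μ(U) > p^{−k}, there is no affine function φ : ℝ → ℝ (φ(x) = a·x + b) such that h_p^[k](x) = φ(x) for all x ∈ U. -/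
open MeasureTheory ENNReal

noncomputable def sawAux (q : ℕ) (y : ℝ) : ℝ :=
  max 0 y + ∑ i ∈ Finset.Icc 2 q, (-1 : ℝ) ^ (i - 1) * max 0 (2 * y - 2 * ((i : ℝ) - 1))

lemma sawAux_succ (q : ℕ) (hq : 1 ≤ q) (y : ℝ) :
    sawAux (q + 1) y = sawAux q y + (-1 : ℝ) ^ q * max 0 (2 * y - 2 * q) := by
  unfold sawAux
  rw [Finset.sum_Icc_succ_top (by omega)]
  push_cast
  simp only [add_sub_cancel_right]
  ring

lemma sawAux_spec (q : ℕ) (hq : 1 ≤ q) :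
    (∀ y : ℝ, 0 ≤ y → y ≤ q → (0 ≤ sawAux q y ∧ sawAux q y ≤ 1 ∧
      ∃ m : ℤ, sawAux q y = y + 2 * m ∨ sawAux q y = -y + 2 * m)) ∧
    ((Even q ∧ ∀ y : ℝ, (q : ℝ) ≤ y → sawAux q y = q - y) ∨
     (Odd q ∧ ∀ y : ℝ, (q : ℝ) ≤ y → sawAux q y = y - (q - 1))) := by
  induction q, hq using Nat.le_induction with
  | base =>
    have h : ∀ y : ℝ, 0 ≤ y → sawAux 1 y = y := by
      intro y hy
      simp [sawAux, hy]
    refine ⟨fun y h0 h1 => ?_, Or.inr ⟨odd_one, fun y hy => ?_⟩⟩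
    · rw [h y h0]
      refine ⟨h0, by simpa using h1, 0, Or.inl (by simp)⟩
    · rw [h y (by push_cast at hy; linarith)]; simp
  | succ q hq ih =>
    obtain ⟨ih1, ih2⟩ := ih
    have hlow : ∀ y : ℝ, y ≤ q → sawAux (q + 1) y = sawAux q y := by
      intro y hy
      rw [sawAux_succ q hq, max_eq_left (by linarith)]; simp
    have hhigh : ∀ y : ℝ, (q : ℝ) ≤ y →
        sawAux (q + 1) y = sawAux q y + (-1 : ℝ) ^ q * (2 * y - 2 * q) := by
      intro y hy
      rw [sawAux_succ q hq, max_eq_right (by linarith)]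
    rcases ih2 with ⟨he, h2⟩ | ⟨he, h2⟩
    · have hh : ∀ y : ℝ, (q : ℝ) ≤ y → sawAux (q + 1) y = y - q := by
        intro y hy
        rw [hhigh y hy, h2 y hy, he.neg_one_pow]; ring
      refine ⟨fun y h0 h1 => ?_, Or.inr ⟨he.add_one, fun y hy => ?_⟩⟩
      · rcases le_total y q with hy | hy
        · rw [hlow y hy]; exact ih1 y h0 hy
        · rw [hh y hy]
          push_cast at h1
          obtain ⟨r, hr⟩ := he
          refine ⟨by linarith, by linarith, -r, Or.inl ?_⟩
          rw [hr]; push_cast; ring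
      · push_cast at hy ⊢
        rw [hh y (by linarith)]; ring
    · have hh : ∀ y : ℝ, (q : ℝ) ≤ y → sawAux (q + 1) y = q + 1 - y := by
        intro y hy
        rw [hhigh y hy, h2 y hy, he.neg_one_pow]; ring
      refine ⟨fun y h0 h1 => ?_, Or.inl ⟨he.add_one, fun y hy => ?_⟩⟩
      · rcases le_total y q with hy | hy
        · rw [hlow y hy]; exact ih1 y h0 hy
        · rw [hh y hy]
          push_cast at h1
          obtain ⟨r, hr⟩ := he
          refine ⟨by linarith, by linarith, r + 1, Or.inr ?_⟩
          rw [hr]; push_cast; ring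
      · push_cast at hy ⊢
        rw [hh y (by linarith)]

lemma sawtooth_spec (p : ℕ) (hp : 2 ≤ p) (x : ℝ) (h0 : 0 ≤ x) (h1 : x ≤ 1) :
    0 ≤ sawtooth p x ∧ sawtooth p x ≤ 1 ∧
      ∃ m : ℤ, sawtooth p x = p * x + 2 * m ∨ sawtooth p x = -(p * x) + 2 * m := by
  have h : sawtooth p x = sawAux p (p * x) := by
    simp only [sawtooth, sawAux, mul_assoc]
  rw [h]
  exact (sawAux_spec p (by omega)).1 _ (by positivity)
    (mul_le_of_le_one_right (by positivity) h1)

lemma sawtooth_iter_spec (p : ℕ) (hp : 2 ≤ p) (k : ℕ) (x : ℝ) (h0 : 0 ≤ x) (h1 : x ≤ 1) :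
    0 ≤ (sawtooth p)^[k] x ∧ (sawtooth p)^[k] x ≤ 1 ∧
      ∃ m : ℤ, (sawtooth p)^[k] x = (p : ℝ) ^ k * x + 2 * m ∨
        (sawtooth p)^[k] x = -((p : ℝ) ^ k * x) + 2 * m := by
  induction k with
  | zero => exact ⟨h0, h1, 0, Or.inl (by simp)⟩
  | succ k ih =>
    rw [Function.iterate_succ_apply']
    obtain ⟨a, b, m, hm⟩ := ih
    obtain ⟨c, d, n, hn⟩ := sawtooth_spec p hp _ a b
    refine ⟨c, d, ?_⟩
    rcases hm with hm | hm <;> rcases hn with hn | hn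
    · exact ⟨p * m + n, Or.inl (by rw [hn, hm]; push_cast; ring)⟩
    · exact ⟨-(p * m) + n, Or.inr (by rw [hn, hm]; push_cast; ring)⟩
    · exact ⟨p * m + n, Or.inr (by rw [hn, hm]; push_cast; ring)⟩
    · exact ⟨-(p * m) + n, Or.inl (by rw [hn, hm]; push_cast; ring)⟩

/-- The `k`-fold composition of the sawtooth `h_p` (with `p ≥ 2`) agrees with no affine
function on any measurable subset of `[0, 1]` of Lebesgue measure exceeding `p^{-k}`:
its fineness of linear regions is `p^{-k}`. -/
theorem sawtooth_iterate_not_affine_on_large_sets (p : ℕ) (hp : 2 ≤ p) (k : ℕ) (hk : 1 ≤ k) :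
    ∀ U : Set ℝ, U ⊆ Set.Icc (0 : ℝ) 1 → MeasurableSet U →
      ((p : ℝ≥0∞) ^ k)⁻¹ < volume U →
      ¬ ∃ a b : ℝ, ∀ x ∈ U, (sawtooth p)^[k] x = a * x + b := by
  rintro U hU - hvol ⟨a, b, hab⟩
  have hN : (0 : ℝ) < (p : ℝ) ^ k := by
    have : (0 : ℝ) < p := by exact_mod_cast (by omega : 0 < p)
    positivity
  have hcast : ENNReal.ofReal (1 / (p : ℝ) ^ k) = ((p : ℝ≥0∞) ^ k)⁻¹ := by
    rw [one_div, ENNReal.ofReal_inv_of_pos hN, ENNReal.ofReal_pow (by positivity),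
      ENNReal.ofReal_natCast]
  set N : ℝ := (p : ℝ) ^ k with hNdef
  have key : ∀ x ∈ U, 0 ≤ a * x + b ∧ a * x + b ≤ 1 ∧
      ∃ m : ℤ, a * x + b = N * x + 2 * m ∨ a * x + b = -(N * x) + 2 * m := by
    intro x hx
    rw [← hab x hx]
    exact sawtooth_iter_spec p hp k x (hU hx).1 (hU hx).2
  refine absurd hvol (not_lt.mpr ?_)
  by_cases h1 : a = N
  · have : U ⊆ Set.Icc (-b / N) ((1 - b) / N) := by
      intro x hx
      obtain ⟨c, d, -⟩ := key x hx
      rw [h1] at c d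
      exact ⟨by rw [div_le_iff₀ hN]; linarith, by rw [le_div_iff₀ hN]; linarith⟩
    refine (measure_mono this).trans ?_
    rw [Real.volume_Icc, ← hcast]
    apply le_of_eq; congr 1; ring
  by_cases h2 : a = -N
  · have : U ⊆ Set.Icc ((b - 1) / N) (b / N) := by
      intro x hx
      obtain ⟨c, d, -⟩ := key x hx
      rw [h2] at c d
      exact ⟨by rw [div_le_iff₀ hN]; linarith, by rw [le_div_iff₀ hN]; linarith⟩
    refine (measure_mono this).trans ?_
    rw [Real.volume_Icc, ← hcast]
    apply le_of_eq; congr 1; ring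
  have h1' : a - N ≠ 0 := sub_ne_zero.mpr h1
  have h2' : a + N ≠ 0 := fun h => h2 (by linarith)
  have hc : U ⊆ Set.range (fun m : ℤ => (2 * (m : ℝ) - b) / (a - N)) ∪
      Set.range (fun m : ℤ => (2 * (m : ℝ) - b) / (a + N)) := by
    intro x hx
    obtain ⟨-, -, m, hm | hm⟩ := key x hx
    · left
      exact ⟨m, by rw [div_eq_iff h1']; linarith⟩
    · right
      exact ⟨m, by rw [div_eq_iff h2']; linarith⟩
  have hcount : U.Countable :=
    ((Set.countable_range _).union (Set.countable_range _)).mono hc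
  rw [hcount.measure_zero]
  exact zero_le
end

section
/- Let p ≥ 2, k ≥ 1, and n ≥ 1 be integers, define h_p : ℝ → ℝ by h_p(x) = max(0, p·x) + Σ_{i=2}^{p} (−1)^{i−1}·max(0, 2p·x − 2(i−1)), and define H_p : ℝⁿ → ℝⁿ coordinatewise by (H_p(x))_j = h_p(x_j). Let H_p^[k] denote the k-fold composition of H_p with itself, and let μ denote Lebesgue measure on ℝⁿ. Then for every measurable set U ⊆ [0, 1]ⁿ with μ(U) > p^{−n·k}, there is no affine map A : ℝⁿ → ℝⁿ such that H_p^[k](x) = A(x) for all x ∈ U. -/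
open MeasureTheory ENNReal

/-- The `n`-dimensional sawtooth layer, applying `h_p` to each coordinate. -/
noncomputable def sawtoothLayer (p n : ℕ) (x : Fin n → ℝ) : Fin n → ℝ :=
  fun j => sawtooth p (x j)

/-- The `i`-th affine piece of the unit triangle wave. -/
noncomputable def triPiece (i : ℤ) (y : ℝ) : ℝ := if Even i then y - i else i + 1 - y

lemma sawtooth_sum_piece (y : ℝ) (hy : 0 ≤ y) (q : ℕ) :
    ∃ i : ℤ, i ≤ q ∧ (i : ℝ) ≤ y ∧ (y ≤ i + 1 ∨ i = q) ∧
      max 0 y + ∑ i ∈ Finset.Icc 2 (q + 1), (-1 : ℝ) ^ (i - 1) * max 0 (2 * y - 2 * ((i : ℝ) - 1))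
        = triPiece i y := by
  induction q with
  | zero =>
    refine ⟨0, by simp, by simpa using hy, by simp, ?_⟩
    simp [triPiece, hy]
  | succ q ih =>
    obtain ⟨i, hiq, hiy, hor, hS⟩ := ih
    rw [Finset.sum_Icc_succ_top (by omega), ← add_assoc, hS]
    have e : q + 1 + 1 - 1 = q + 1 := by omega
    rw [e]
    push_cast
    rcases le_total y (q + 1) with h | h
    · refine ⟨i, by omega, hiy, ?_, ?_⟩
      · left
        rcases hor with h1 | h1
        · exact h1
        · rw [h1]; push_cast; exact h
      · rw [max_eq_left (by linarith)]; simp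
    · refine ⟨q + 1, by omega, by push_cast; exact h, Or.inr (by push_cast; rfl), ?_⟩
      rw [max_eq_right (by linarith)]
      have hval : triPiece i y = triPiece q y := by
        rcases hor with h1 | h1
        · have h2 : (q : ℝ) ≤ i := by linarith
          have h3 : (q : ℤ) ≤ i := by exact_mod_cast h2
          rw [le_antisymm hiq h3]
        · rw [h1]
      rw [hval]
      unfold triPiece
      rcases Nat.even_or_odd q with hq | hq
      · have h1 : Even (q : ℤ) := by exact_mod_cast hq
        have h2 : ¬ Even ((q : ℤ) + 1) := by
          rw [Int.not_even_iff_odd]; exact h1.add_one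
        rw [if_pos h1, if_neg h2, hq.add_one.neg_one_pow]
        push_cast; ring
      · have h0 : Odd (q : ℤ) := by exact_mod_cast hq
        have h1 : ¬ Even (q : ℤ) := by rwa [Int.not_even_iff_odd]
        rw [if_neg h1, if_pos h0.add_one, hq.add_one.neg_one_pow]
        push_cast; ring

lemma sawtooth_piece (p : ℕ) (hp : 1 ≤ p) (x : ℝ) (h0 : 0 ≤ x) (h1 : x ≤ 1) :
    ∃ i : ℤ, (i : ℝ) ≤ p * x ∧ p * x ≤ i + 1 ∧ sawtooth p x = triPiece i (p * x) := by
  obtain ⟨q, rfl⟩ : ∃ q, p = q + 1 := ⟨p - 1, by omega⟩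
  obtain ⟨i, -, hiy, hor, hS⟩ := sawtooth_sum_piece (((q + 1 : ℕ) : ℝ) * x) (by positivity) q
  refine ⟨i, hiy, ?_, ?_⟩
  · rcases hor with h | h
    · exact h
    · rw [h]; push_cast; nlinarith
  · rw [← hS]
    unfold sawtooth
    simp only [mul_assoc]

lemma sawtooth_iterate_piece (p : ℕ) (hp : 1 ≤ p) (k : ℕ) (x : ℝ) (h0 : 0 ≤ x) (h1 : x ≤ 1) :
    ∃ i : ℤ, (i : ℝ) ≤ (p : ℝ) ^ k * x ∧ (p : ℝ) ^ k * x ≤ i + 1 ∧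
      (sawtooth p)^[k] x = triPiece i ((p : ℝ) ^ k * x) := by
  induction k with
  | zero => exact ⟨0, by simpa using h0, by simpa using h1, by simp [triPiece]⟩
  | succ k ih =>
    obtain ⟨i, ha, hb, hv⟩ := ih
    rw [Function.iterate_succ_apply']
    set v := (sawtooth p)^[k] x with hvdef
    have hv0 : 0 ≤ v ∧ v ≤ 1 := by
      rw [hv]; unfold triPiece
      split_ifs <;> constructor <;> linarith
    obtain ⟨j, hc, hd, hw⟩ := sawtooth_piece p hp v hv0.1 hv0.2
    rw [hw]
    by_cases hi : Even i
    · have hv2 : v = (p : ℝ) ^ k * x - i := by rw [hv]; simp [triPiece, hi]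
      have hpv : (p : ℝ) * v = (p : ℝ) ^ (k + 1) * x - p * i := by rw [hv2]; ring
      refine ⟨j + p * i, by push_cast; linarith, by push_cast; linarith, ?_⟩
      have hpar : Even (j + p * i) ↔ Even j := by
        rw [Int.even_add]; simp [hi]
      unfold triPiece
      simp only [hpar, hpv]
      split_ifs <;> push_cast <;> ring
    · have hv2 : v = i + 1 - (p : ℝ) ^ k * x := by rw [hv]; simp only [triPiece, hi, if_false]
      have hpv : (p : ℝ) * v = p * (i + 1) - (p : ℝ) ^ (k + 1) * x := by rw [hv2]; ring
      refine ⟨p * (i + 1) - 1 - j, by push_cast; linarith, by push_cast; linarith, ?_⟩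
      have hi' : Even (i + 1) := (Int.not_even_iff_odd.1 hi).add_one
      have hpar : Even (p * (i + 1) - 1 - j) ↔ ¬ Even j := by
        have h3 : Even ((p : ℤ) * (i + 1)) := hi'.mul_left _
        rw [Int.even_sub, Int.even_sub]
        simp [h3]
      unfold triPiece
      simp only [hpar, hpv]
      split_ifs <;> push_cast <;> ring

lemma sawtoothLayer_iterate_apply (p n k : ℕ) (x : Fin n → ℝ) (j : Fin n) :
    (sawtoothLayer p n)^[k] x j = (sawtooth p)^[k] (x j) := by
  induction k generalizing x with
  | zero => rfl
  | succ k ih => rw [Function.iterate_succ_apply, Function.iterate_succ_apply, ih]; rfl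

/-- The affine map agreeing with the iterate on the cell with index `c`. -/
noncomputable def cellMap {n : ℕ} (M : ℝ) (c : Fin n → ℤ) : (Fin n → ℝ) →ᵃ[ℝ] (Fin n → ℝ) :=
  (LinearMap.pi fun j => (if Even (c j) then M else -M) •
      (LinearMap.proj j : (Fin n → ℝ) →ₗ[ℝ] ℝ)).toAffineMap
    + AffineMap.const ℝ (Fin n → ℝ) (fun j => if Even (c j) then -(c j : ℝ) else c j + 1)

lemma cellMap_apply {n : ℕ} (M : ℝ) (c : Fin n → ℤ) (x : Fin n → ℝ) (j : Fin n) :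
    cellMap M c x j = triPiece (c j) (M * x j) := by
  simp only [cellMap, triPiece, AffineMap.coe_add, Pi.add_apply, LinearMap.coe_toAffineMap,
    LinearMap.pi_apply, LinearMap.smul_apply, LinearMap.proj_apply, AffineMap.const_apply,
    smul_eq_mul]
  split_ifs <;> ring

lemma cellMap_injective {n : ℕ} (M : ℝ) (hM : 0 < M) :
    Function.Injective (cellMap (n := n) M) := by
  intro c d h
  funext j
  have e0 : triPiece (c j) (M * 0) = triPiece (d j) (M * 0) := by
    have := congrArg (fun f => f (fun _ => (0 : ℝ)) j) h
    simpa only [cellMap_apply] using this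
  have e1 : triPiece (c j) (M * 1) = triPiece (d j) (M * 1) := by
    have := congrArg (fun f => f (fun _ => (1 : ℝ)) j) h
    simpa only [cellMap_apply] using this
  unfold triPiece at e0 e1
  have : (c j : ℝ) = d j := by
    split_ifs at e0 e1 <;> linarith
  exact_mod_cast this

lemma volume_eqLocus_zero {n : ℕ} (f g : (Fin n → ℝ) →ᵃ[ℝ] (Fin n → ℝ)) (h : f ≠ g) :
    volume {x | f x = g x} = 0 := by
  set s : AffineSubspace ℝ (Fin n → ℝ) :=
    (AffineSubspace.mk' (0 : Fin n → ℝ) ⊥).comap (f - g)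
  have hs : {x | f x = g x} = (s : Set (Fin n → ℝ)) := by
    ext x
    simp [s, AffineSubspace.mem_mk', sub_eq_zero]
  rw [hs]
  apply Measure.addHaar_affineSubspace
  intro htop
  apply h
  ext1 x
  have : x ∈ {x | f x = g x} := by rw [hs, htop]; trivial
  exact this

/-- The `k`-fold composition of the `n`-dimensional sawtooth layer `H_p` (with `p ≥ 2`)
agrees with no affine map on any measurable subset of `[0, 1]ⁿ` of Lebesgue measure
exceeding `p^{-n·k}`: its fineness of linear regions is `p^{-n·k}`. -/
theorem sawtoothLayer_iterate_not_affine_on_large_sets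
    (p : ℕ) (hp : 2 ≤ p) (k : ℕ) (hk : 1 ≤ k) (n : ℕ) (hn : 1 ≤ n) :
    ∀ U : Set (Fin n → ℝ), U ⊆ Set.pi Set.univ (fun _ => Set.Icc (0 : ℝ) 1) →
      MeasurableSet U → ((p : ℝ≥0∞) ^ (n * k))⁻¹ < volume U →
      ¬ ∃ A : (Fin n → ℝ) →ᵃ[ℝ] (Fin n → ℝ),
          ∀ x ∈ U, (sawtoothLayer p n)^[k] x = A x := by
  rintro U hU - hvol ⟨A, hA⟩
  refine absurd hvol (not_lt.2 ?_)
  have hp0 : (0 : ℝ) < p := by exact_mod_cast (by omega : 0 < p)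
  set M : ℝ := (p : ℝ) ^ k with hMdef
  have hM : 0 < M := by positivity
  have key : ∀ x ∈ U, ∃ c : Fin n → ℤ, (∀ j, (c j : ℝ) ≤ M * x j ∧ M * x j ≤ c j + 1) ∧
      cellMap M c x = A x := by
    intro x hx
    have hx' : ∀ j, 0 ≤ x j ∧ x j ≤ 1 := fun j => hU hx j (Set.mem_univ j)
    choose c hc using fun j => sawtooth_iterate_piece p (by omega) k (x j) (hx' j).1 (hx' j).2
    refine ⟨c, fun j => ⟨(hc j).1, (hc j).2.1⟩, ?_⟩
    rw [← hA x hx]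
    funext j
    rw [cellMap_apply, sawtoothLayer_iterate_apply, (hc j).2.2]
  set N : Set (Fin n → ℝ) :=
    ⋃ c : Fin n → ℤ, ⋃ _ : cellMap M c ≠ A, {x | cellMap M c x = A x} with hN
  have hN0 : volume N = 0 := by
    rw [hN, measure_iUnion_null_iff]
    intro c
    rw [measure_iUnion_null_iff]
    intro hc
    exact volume_eqLocus_zero _ _ hc
  by_cases hex : ∃ c, cellMap M c = A
  · obtain ⟨c, hc⟩ := hex
    have hsub : U ⊆ N ∪ Set.Icc (fun j => (c j : ℝ) / M) (fun j => ((c j : ℝ) + 1) / M) := by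
      intro x hx
      obtain ⟨d, hd, hdA⟩ := key x hx
      by_cases hdc : cellMap M d = A
      · right
        have : d = c := cellMap_injective M hM (hdc.trans hc.symm)
        subst this
        constructor
        · intro j
          rw [div_le_iff₀ hM]; linarith [(hd j).1]
        · intro j
          rw [le_div_iff₀ hM]; linarith [(hd j).2]
      · left
        simp only [hN, Set.mem_iUnion]
        exact ⟨d, hdc, hdA⟩
    refine (measure_mono hsub).trans ((measure_union_le _ _).trans ?_)
    rw [hN0, zero_add, Real.volume_Icc_pi]
    have : ∀ j, ((c j : ℝ) + 1) / M - c j / M = M⁻¹ := by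
      intro j; field_simp; ring
    simp only [this]
    rw [Finset.prod_const, Finset.card_univ, Fintype.card_fin, ENNReal.ofReal_inv_of_pos hM, hMdef,
      ENNReal.ofReal_pow hp0.le, ENNReal.ofReal_natCast, ENNReal.inv_pow, ← pow_mul, mul_comm k n,
      ENNReal.inv_pow]
  · have hsub : U ⊆ N := by
      intro x hx
      obtain ⟨d, hd, hdA⟩ := key x hx
      simp only [hN, Set.mem_iUnion]
      exact ⟨d, fun h => hex ⟨d, h⟩, hdA⟩
    rw [measure_mono_null hsub hN0]
    exact zero_le
end

section
/- Let n₀ ≥ 1, L ≥ 1, n_L ≥ 1, and n₁, …, n_{L−1} be integers with n_l ≥ n₀ for every l ∈ {1, …, L−1}, and let μ denote Lebesgue measure on ℝ^{n₀}. Then there exist affine maps A_l : ℝ^{n_{l−1}} → ℝ^{n_l} for l = 1, …, L such that the function F := A_L ∘ ρ_{L−1} ∘ A_{L−1} ∘ ⋯ ∘ ρ_1 ∘ A_1 — where each ρ_l : ℝ^{n_l} → ℝ^{n_l} applies x ↦ max(0, x) to each coordinate — satisfies: for every measurable set U ⊆ [0, 1]^{n₀} with μ(U) > ∏_{l=1}^{L−1}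 ⌊n_l/n₀⌋^{−n₀}, there is no affine map A : ℝ^{n₀} → ℝ^{n_L} with F(x) = A(x) for all x ∈ U. -/
open MeasureTheory ENNReal

/-- An `(L+1)`-affine-layer ReLU network: `reluNet d A L = A_L ∘ ρ ∘ A_{L-1} ∘ ⋯ ∘ ρ ∘ A_0`,
where `ρ` applies `x ↦ max 0 x` to each coordinate and `A l : ℝ^{d l} → ℝ^{d (l+1)}` are
affine maps. -/
noncomputable def reluNet (d : ℕ → ℕ)
    (A : ∀ l : ℕ, (Fin (d l) → ℝ) →ᵃ[ℝ] (Fin (d (l + 1)) → ℝ)) :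
    ∀ L : ℕ, (Fin (d 0) → ℝ) → (Fin (d (L + 1)) → ℝ)
  | 0 => fun x => A 0 x
  | L + 1 => fun x => A (L + 1) (fun j => max 0 (reluNet d A L x j))

/-- `u` is the value at `y` of the even `2`-periodic triangle wave. -/
def TriRel (y u : ℝ) : Prop :=
  0 ≤ u ∧ u ≤ 1 ∧ ∃ m : ℤ, u = y + 2 * m ∨ u = -y + 2 * m

lemma TriRel.unique {y u v : ℝ} (hu : TriRel y u) (hv : TriRel y v) : u = v := by
  obtain ⟨hu0, hu1, m, hm⟩ := hu
  obtain ⟨hv0, hv1, m', hm'⟩ := hv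
  have key1 : ∀ a b : ℝ, 0 ≤ a → a ≤ 1 → 0 ≤ b → b ≤ 1 → ∀ k : ℤ, a - b = 2 * k → a = b := by
    intro a b ha ha1 hb hb1 k hk
    have h1 : (k : ℝ) < 1 := by linarith
    have h2 : (-1 : ℝ) < k := by linarith
    have h1' : k < 1 := by exact_mod_cast h1
    have h2' : -1 < k := by exact_mod_cast h2
    have : k = 0 := by omega
    subst this
    push_cast at hk
    linarith
  have key2 : ∀ a b : ℝ, 0 ≤ a → a ≤ 1 → 0 ≤ b → b ≤ 1 → ∀ k : ℤ, a + b = 2 * k → a = b := by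
    intro a b ha ha1 hb hb1 k hk
    have h1 : (k : ℝ) < 2 := by linarith
    have h2 : (-1 : ℝ) < k := by linarith
    have h1' : k < 2 := by exact_mod_cast h1
    have h2' : -1 < k := by exact_mod_cast h2
    have : k = 0 ∨ k = 1 := by omega
    rcases this with h | h
    · subst h
      push_cast at hk
      linarith
    · subst h
      push_cast at hk
      linarith
  rcases hm with h | h <;> rcases hm' with h' | h'
  · exact key1 u v hu0 hu1 hv0 hv1 (m - m') (by push_cast; linarith)
  · exact key2 u v hu0 hu1 hv0 hv1 (m + m') (by push_cast; linarith)
  · exact key2 u v hu0 hu1 hv0 hv1 (m + m') (by push_cast; linarith)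
  · exact key1 u v hu0 hu1 hv0 hv1 (m - m') (by push_cast; linarith)

lemma TriRel.comp {y u v : ℝ} (p : ℕ) (hu : TriRel y u) (hv : TriRel (p * u) v) :
    TriRel (p * y) v := by
  obtain ⟨hu0, hu1, m, hm⟩ := hu
  obtain ⟨hv0, hv1, m', hm'⟩ := hv
  refine ⟨hv0, hv1, ?_⟩
  rcases hm with h | h <;> rcases hm' with h' | h' <;> subst h
  · exact ⟨p * m + m', Or.inl (by push_cast; linarith)⟩
  · exact ⟨-p * m + m', Or.inr (by push_cast; linarith)⟩
  · exact ⟨p * m + m', Or.inr (by push_cast; linarith)⟩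
  · exact ⟨-p * m + m', Or.inl (by push_cast; linarith)⟩

/-- offset of the `k`-th piece of the triangle wave -/
def triOff (k : ℕ) : ℤ := if Even k then -k else k + 1

lemma triOff_inj : Function.Injective triOff := by
  intro a b h
  unfold triOff at h
  split_ifs at h <;> omega

lemma triRel_piece (k : ℕ) (t : ℝ) (h0 : (k : ℝ) ≤ t) (h1 : t ≤ k + 1) :
    TriRel t ((-1) ^ k * t + triOff k) := by
  unfold triOff
  by_cases hk : Even k
  · rw [if_pos hk, hk.neg_one_pow]
    obtain ⟨m, rfl⟩ := hk
    push_cast at *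
    exact ⟨by linarith, by linarith, -m, Or.inl (by push_cast; ring)⟩
  · rw [if_neg hk, (Nat.not_even_iff_odd.1 hk).neg_one_pow]
    obtain ⟨m, rfl⟩ := Nat.not_even_iff_odd.1 hk
    push_cast at *
    exact ⟨by linarith, by linarith, m + 1, Or.inr (by push_cast; ring)⟩

/-- weights of the sawtooth -/
noncomputable def sawW (j : ℕ) : ℝ := if j = 0 then 1 else 2 * (-1) ^ j

lemma saw_closed (t : ℝ) (k : ℕ) :
    ∑ j ∈ Finset.range (k + 1), sawW j * (t - j) = (-1) ^ k * t + triOff k := by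
  induction k with
  | zero => simp [sawW, triOff]
  | succ k ih =>
    rw [Finset.sum_range_succ, ih]
    unfold sawW triOff
    by_cases hk : Even k
    · have hk' : ¬ Even (k + 1) := by simpa [Nat.even_add_one] using hk
      rw [if_pos hk, if_neg hk', if_neg (Nat.succ_ne_zero k), pow_succ, hk.neg_one_pow]
      push_cast
      ring
    · have hk' : Even (k + 1) := by simpa [Nat.even_add_one] using hk
      rw [if_neg hk, if_pos hk', if_neg (Nat.succ_ne_zero k), pow_succ,
        (Nat.not_even_iff_odd.1 hk).neg_one_pow]
      push_cast
      ring

lemma exists_piece (p : ℕ) (hp : 1 ≤ p) (t : ℝ) (h0 : 0 ≤ t) (h1 : t ≤ p) :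
    ∃ k : ℕ, k < p ∧ (k : ℝ) ≤ t ∧ t ≤ k + 1 := by
  rcases h1.lt_or_eq with h | h
  · refine ⟨⌊t⌋₊, (Nat.floor_lt h0).2 h, Nat.floor_le h0, (Nat.lt_floor_add_one t).le⟩
  · obtain ⟨q, rfl⟩ : ∃ q, p = q + 1 := ⟨p - 1, by omega⟩
    refine ⟨q, by omega, ?_, ?_⟩ <;> · push_cast at h; linarith

lemma saw_tri (p : ℕ) (hp : 1 ≤ p) (t : ℝ) (h0 : 0 ≤ t) (h1 : t ≤ p) :
    TriRel t (∑ j ∈ Finset.range p, sawW j * max 0 (t - j)) := by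
  obtain ⟨k, hk, hk0, hk1⟩ := exists_piece p hp t h0 h1
  have : ∑ j ∈ Finset.range p, sawW j * max 0 (t - j)
      = ∑ j ∈ Finset.range (k + 1), sawW j * (t - j) := by
    rw [← Finset.sum_subset (Finset.range_subset_range.2 (show k + 1 ≤ p from hk))]
    · refine Finset.sum_congr rfl fun j hj => ?_
      have : (j : ℝ) ≤ k := by
        have := Finset.mem_range.1 hj
        exact_mod_cast (by omega : j ≤ k)
      rw [max_eq_right (by linarith)]
    · intro j _ hj
      have : (k : ℝ) + 1 ≤ j := by
        have := mt Finset.mem_range.2 hj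
        exact_mod_cast (by omega : k + 1 ≤ j)
      rw [max_eq_left (by linarith), mul_zero]
  rw [this, saw_closed]
  exact triRel_piece k t hk0 hk1

lemma dec_lt {m n : ℕ} (i : Fin n) (j : Fin (m / n)) : (j : ℕ) * n + i < m := by
  have h1 : ((j : ℕ) + 1) * n ≤ m :=
    (Nat.mul_le_mul_right n (show (j : ℕ) + 1 ≤ m / n from j.2)).trans (Nat.div_mul_le_self m n)
  have := i.2
  nlinarith

/-- decoding map -/
noncomputable def decMap (m n : ℕ) : (Fin m → ℝ) →ₗ[ℝ] (Fin n → ℝ) :=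
  LinearMap.pi fun i => ∑ j : Fin (m / n), sawW j • LinearMap.proj (⟨j * n + i, dec_lt i j⟩ : Fin m)

lemma decMap_apply (m n : ℕ) (v : Fin m → ℝ) (i : Fin n) :
    decMap m n v i = ∑ j : Fin (m / n), sawW j * v ⟨j * n + i, dec_lt i j⟩ := by
  simp [decMap]

lemma decMap_self (n : ℕ) (hn : 1 ≤ n) (v : Fin n → ℝ) : decMap n n v = v := by
  funext i
  rw [decMap_apply]
  have h : n / n = 1 := Nat.div_self hn
  rw [Finset.sum_eq_single (⟨0, by omega⟩ : Fin (n / n))]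
  · simp [sawW]
  · intro b _ hb
    exact absurd (Fin.ext (by have := b.2; simp; omega)) hb
  · simp

/-- encoding map -/
noncomputable def encMap (n m : ℕ) (hn : 1 ≤ n) : (Fin n → ℝ) →ᵃ[ℝ] (Fin m → ℝ) :=
  (LinearMap.pi fun k : Fin m =>
    ((m / n : ℕ) : ℝ) • LinearMap.proj (⟨k % n, Nat.mod_lt _ hn⟩ : Fin n)).toAffineMap
  + AffineMap.const ℝ (Fin n → ℝ) (fun k : Fin m => -(((k : ℕ) / n : ℕ) : ℝ))

lemma encMap_apply (n m : ℕ) (hn : 1 ≤ n) (y : Fin n → ℝ) (k : Fin m) :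
    encMap n m hn y k = ((m / n : ℕ) : ℝ) * y ⟨k % n, Nat.mod_lt _ hn⟩ - (((k : ℕ) / n : ℕ) : ℝ) := by
  simp [encMap, sub_eq_add_neg]

lemma dec_enc (n m : ℕ) (hn : 1 ≤ n) (hm : n ≤ m) (y : Fin n → ℝ)
    (hy : ∀ i, 0 ≤ y i ∧ y i ≤ 1) (i : Fin n) :
    TriRel ((m / n : ℕ) * y i) (decMap m n (fun k => max 0 (encMap n m hn y k)) i) := by
  have hp : 1 ≤ m / n := (Nat.one_le_div_iff hn).2 hm
  have h := saw_tri (m / n) hp ((m / n : ℕ) * y i) (mul_nonneg (Nat.cast_nonneg _) (hy i).1)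
    (mul_le_of_le_one_right (Nat.cast_nonneg _) (hy i).2)
  rw [decMap_apply]
  convert h using 1
  rw [← Fin.sum_univ_eq_sum_range (fun j => sawW j * max 0 (((m / n : ℕ) : ℝ) * y i - j))]
  refine Finset.sum_congr rfl fun j _ => ?_
  rw [encMap_apply]
  have h1 : ((j : ℕ) * n + i) % n = i := by
    rw [Nat.mul_add_mod_self_right, Nat.mod_eq_of_lt i.2]
  have h2 : ((j : ℕ) * n + i) / n = j := by
    rw [add_comm, Nat.add_mul_div_right _ _ hn, Nat.div_eq_of_lt i.2, zero_add]
  simp only [h1, h2]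

/-- output functional -/
noncomputable def outFun {n : ℕ} (c : Fin n → ℝ) (m : ℕ) : (Fin n → ℝ) →ₗ[ℝ] (Fin m → ℝ) :=
  LinearMap.pi fun _ => ∑ i, c i • LinearMap.proj i

lemma outFun_apply {n : ℕ} (c : Fin n → ℝ) (m : ℕ) (y : Fin n → ℝ) (k : Fin m) :
    outFun c m y k = ∑ i, c i * y i := by
  simp [outFun]

/-- the layers of the network; `N` is the index of the last affine layer -/
noncomputable def netA (d : ℕ → ℕ) (hd0 : 1 ≤ d 0) (c : Fin (d 0) → ℝ) (N : ℕ) (l : ℕ) :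
    (Fin (d l) → ℝ) →ᵃ[ℝ] (Fin (d (l + 1)) → ℝ) :=
  (if l = N then (outFun c (d (l + 1))).toAffineMap else encMap (d 0) (d (l + 1)) hd0).comp
    (decMap (d l) (d 0)).toAffineMap

/-- decoded post-activations -/
noncomputable def decoded (d : ℕ → ℕ)
    (A : ∀ l : ℕ, (Fin (d l) → ℝ) →ᵃ[ℝ] (Fin (d (l + 1)) → ℝ)) (x : Fin (d 0) → ℝ) :
    ℕ → (Fin (d 0) → ℝ)
  | 0 => x
  | l + 1 => decMap (d (l + 1)) (d 0) (fun j => max 0 (reluNet d A l x j))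

lemma reluNet_enc (d : ℕ → ℕ) (hd0 : 1 ≤ d 0) (c : Fin (d 0) → ℝ) (N : ℕ) (x : Fin (d 0) → ℝ)
    (l : ℕ) (hl : l ≠ N) :
    reluNet d (netA d hd0 c N) l x
      = encMap (d 0) (d (l + 1)) hd0 (decoded d (netA d hd0 c N) x l) := by
  cases l with
  | zero => simp [reluNet, decoded, netA, hl, decMap_self _ hd0]
  | succ l => simp [reluNet, decoded, netA, hl]

lemma reluNet_out (d : ℕ → ℕ) (hd0 : 1 ≤ d 0) (c : Fin (d 0) → ℝ) (N : ℕ) (x : Fin (d 0) → ℝ) :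
    reluNet d (netA d hd0 c N) N x
      = outFun c (d (N + 1)) (decoded d (netA d hd0 c N) x N) := by
  cases N with
  | zero => simp [reluNet, decoded, netA, decMap_self _ hd0]
  | succ l => simp [reluNet, decoded, netA]

lemma decoded_tri (d : ℕ → ℕ) (hd0 : 1 ≤ d 0) (c : Fin (d 0) → ℝ) (N : ℕ)
    (hd : ∀ l, 1 ≤ l → l ≤ N → d 0 ≤ d l) (x : Fin (d 0) → ℝ)
    (hx : ∀ i, 0 ≤ x i ∧ x i ≤ 1) (l : ℕ) (hl : l ≤ N) (i : Fin (d 0)) :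
    TriRel ((∏ l ∈ Finset.Icc 1 l, (d l / d 0) : ℕ) * x i)
      (decoded d (netA d hd0 c N) x l i) := by
  induction l generalizing i with
  | zero => exact ⟨(hx i).1, (hx i).2, 0, Or.inl (by simp [decoded])⟩
  | succ l ih =>
    have h := fun i => ih (by omega) i
    have h2 := dec_enc (d 0) (d (l + 1)) hd0 (hd _ (by omega) hl)
      (decoded d (netA d hd0 c N) x l) (fun i => ⟨(h i).1, (h i).2.1⟩) i
    have h3 := TriRel.comp _ (h i) h2
    rw [Finset.prod_Icc_succ_top (by omega)]
    have e : decoded d (netA d hd0 c N) x (l + 1) i = decMap (d (l + 1)) (d 0)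
        (fun k => max 0 (encMap (d 0) (d (l + 1)) hd0 (decoded d (netA d hd0 c N) x l) k)) i := by
      simp only [decoded, reluNet_enc d hd0 c N x l (by omega)]
    rw [e]
    convert h3 using 1
    push_cast
    ring

lemma exists_indep (n : ℕ) : ∃ c : Fin n → ℝ, LinearIndependent ℚ c := by
  have h : (n : Cardinal) ≤ Module.rank ℚ ℝ := by
    rw [Real.rank_rat_real]
    exact (Cardinal.natCast_le_aleph0).trans Cardinal.aleph0_le_continuum
  obtain ⟨s, hs, hli⟩ := le_rank_iff_exists_linearIndependent_finset.1 h
  exact ⟨fun i => (s.equivFin.symm (Fin.cast hs.symm i) : ℝ),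
    hli.comp (fun i => s.equivFin.symm (Fin.cast hs.symm i))
      (s.equivFin.symm.injective.comp (Fin.cast_injective _))⟩

/-- the affine map on box `K` -/
noncomputable def boxMap {n : ℕ} (c : Fin n → ℝ) (P : ℕ) (K : Fin n → Fin P) :
    (Fin n → ℝ) →ᵃ[ℝ] ℝ :=
  (∑ i, (c i * (-1) ^ (K i : ℕ) * P) • LinearMap.proj i : (Fin n → ℝ) →ₗ[ℝ] ℝ).toAffineMap
  + AffineMap.const ℝ (Fin n → ℝ) (∑ i, c i * triOff (K i))

lemma boxMap_apply {n : ℕ} (c : Fin n → ℝ) (P : ℕ) (K : Fin n → Fin P) (x : Fin n → ℝ) :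
    boxMap c P K x = ∑ i, c i * ((-1) ^ (K i : ℕ) * (P * x i) + triOff (K i)) := by
  simp only [boxMap, AffineMap.coe_add, Pi.add_apply, LinearMap.coe_toAffineMap,
    LinearMap.sum_apply, LinearMap.smul_apply, LinearMap.proj_apply, smul_eq_mul,
    AffineMap.const_apply]
  rw [← Finset.sum_add_distrib]
  exact Finset.sum_congr rfl fun i _ => by ring

lemma boxMap_inj {n : ℕ} (c : Fin n → ℝ) (hc : LinearIndependent ℚ c) (P : ℕ) :
    Function.Injective (boxMap c P) := by
  intro K K' h
  have h0 : boxMap c P K 0 = boxMap c P K' 0 := by rw [h]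
  rw [boxMap_apply, boxMap_apply, ← sub_eq_zero, ← Finset.sum_sub_distrib] at h0
  have h1 := Fintype.linearIndependent_iff.1 hc
    (fun i => ((triOff (K i) - triOff (K' i) : ℤ) : ℚ)) (by
      rw [← h0]
      refine Finset.sum_congr rfl fun i _ => ?_
      rw [Rat.smul_def]
      simp
      ring)
  funext i
  have h2 := h1 i
  have h3 : triOff (K i) - triOff (K' i) = 0 := by exact_mod_cast h2
  exact Fin.ext (triOff_inj (by omega))

lemma affine_eq_null {n : ℕ} (f g : (Fin n → ℝ) →ᵃ[ℝ] ℝ) (h : f ≠ g) :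
    volume {x | f x = g x} = 0 := by
  have h1 := Measure.addHaar_affineSubspace (volume : Measure (Fin n → ℝ))
    (AffineSubspace.comap (f - g) (AffineSubspace.mk' (0 : ℝ) ⊥)) (by
      intro htop
      apply h
      ext x
      have : x ∈ AffineSubspace.comap (f - g) (AffineSubspace.mk' (0 : ℝ) ⊥) := by
        rw [htop]; trivial
      simpa [AffineSubspace.mem_comap, AffineSubspace.mem_mk', sub_eq_zero] using this)
  refine measure_mono_null ?_ h1
  intro x hx
  have hx' : f x = g x := hx
  simp [AffineSubspace.mem_comap, AffineSubspace.mem_mk', sub_eq_zero, hx']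

/-- a box of the grid -/
def gridBox {n : ℕ} (P : ℕ) (K : Fin n → Fin P) : Set (Fin n → ℝ) :=
  Set.Icc (fun i => (K i : ℝ) / P) (fun i => ((K i : ℝ) + 1) / P)

lemma volume_gridBox {n : ℕ} (P : ℕ) (hP : 1 ≤ P) (K : Fin n → Fin P) :
    volume (gridBox P K) = ((P : ℝ≥0∞) ^ n)⁻¹ := by
  have : (0 : ℝ) < P := by exact_mod_cast hP
  rw [gridBox, Real.volume_Icc_pi]
  have e : ∀ i, ((K i : ℝ) + 1) / P - (K i : ℝ) / P = (P : ℝ)⁻¹ := by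
    intro i; field_simp; ring
  simp only [e, Finset.prod_const, Finset.card_univ, Fintype.card_fin]
  rw [ENNReal.ofReal_inv_of_pos this, ENNReal.ofReal_natCast, ENNReal.inv_pow]

lemma volume_agree {n : ℕ} (c : Fin n → ℝ) (hc : LinearIndependent ℚ c) (P : ℕ) (hP : 1 ≤ P)
    (U : Set (Fin n → ℝ)) (F : (Fin n → ℝ) → ℝ) (B : (Fin n → ℝ) →ᵃ[ℝ] ℝ)
    (hU : ∀ x ∈ U, ∃ K, x ∈ gridBox P K ∧ F x = boxMap c P K x) (hB : ∀ x ∈ U, F x = B x) :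
    volume U ≤ ((P : ℝ≥0∞) ^ n)⁻¹ := by
  classical
  have hnull : volume (⋃ K ∈ {K | boxMap c P K ≠ B}, {x | boxMap c P K x = B x}) = 0 := by
    refine (measure_biUnion_null_iff (Set.to_countable _)).2 fun K hK => affine_eq_null _ _ hK
  by_cases h : ∃ K, boxMap c P K = B
  · obtain ⟨K0, hK0⟩ := h
    have hsub : U ⊆ gridBox P K0 ∪ ⋃ K ∈ {K | boxMap c P K ≠ B}, {x | boxMap c P K x = B x} := by
      intro x hx
      obtain ⟨K, hK, hF⟩ := hU x hx
      by_cases hKB : boxMap c P K = B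
      · left
        rwa [← boxMap_inj c hc P (hKB.trans hK0.symm)]
      · right
        exact Set.mem_biUnion (show K ∈ {K | boxMap c P K ≠ B} from hKB) (hF.symm.trans (hB x hx))
    calc volume U ≤ _ := measure_mono hsub
      _ ≤ _ := measure_union_le _ _
      _ = _ := by rw [hnull, add_zero, volume_gridBox P hP]
  · have hsub : U ⊆ ⋃ K ∈ {K | boxMap c P K ≠ B}, {x | boxMap c P K x = B x} := by
      intro x hx
      obtain ⟨K, hK, hF⟩ := hU x hx
      exact Set.mem_biUnion (show K ∈ {K | boxMap c P K ≠ B} from fun e => h ⟨K, e⟩)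
        (hF.symm.trans (hB x hx))
    rw [measure_mono_null hsub hnull]
    exact zero_le

/-- **Lemma 2**: there is a choice of affine layers of an `L`-layer ReLU network with `d l`
units at the `l`-th layer (`d l ≥ d 0` for `1 ≤ l ≤ L−1`) whose fineness of linear regions
is at most `∏_{l=1}^{L−1} ⌊d l / d 0⌋^{−d 0}`: the network agrees with no affine map on any
measurable subset of `[0,1]^{d 0}` of measure exceeding this bound. -/
theorem relu_network_fineness (L : ℕ) (hL : 1 ≤ L) (d : ℕ → ℕ)
    (hd0 : 1 ≤ d 0) (hdL : 1 ≤ d L)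
    (hd : ∀ l, 1 ≤ l → l ≤ L - 1 → d 0 ≤ d l) :
    ∃ A : ∀ l : ℕ, (Fin (d l) → ℝ) →ᵃ[ℝ] (Fin (d (l + 1)) → ℝ),
      ∀ U : Set (Fin (d 0) → ℝ), U ⊆ Set.pi Set.univ (fun _ => Set.Icc (0 : ℝ) 1) →
        MeasurableSet U →
        (∏ l ∈ Finset.Icc 1 (L - 1), ((d l / d 0 : ℕ) : ℝ≥0∞) ^ (d 0))⁻¹ < volume U →
        ¬ ∃ B : (Fin (d 0) → ℝ) →ᵃ[ℝ] (Fin (d (L - 1 + 1)) → ℝ),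
            ∀ x ∈ U, reluNet d A (L - 1) x = B x := by
  obtain ⟨N, rfl⟩ : ∃ N, L = N + 1 := ⟨L - 1, by omega⟩
  simp only [Nat.add_sub_cancel] at hd ⊢
  obtain ⟨c, hc⟩ := exists_indep (d 0)
  refine ⟨netA d hd0 c N, fun U hUsub _ hvol => ?_⟩
  rintro ⟨B, hB⟩
  have hP : 1 ≤ ∏ l ∈ Finset.Icc 1 N, (d l / d 0) :=
    Finset.one_le_prod' fun l hl => (Nat.one_le_div_iff hd0).2
      (hd l (Finset.mem_Icc.1 hl).1 (Finset.mem_Icc.1 hl).2)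
  set P := ∏ l ∈ Finset.Icc 1 N, (d l / d 0) with hPdef
  have hP0 : (0 : ℝ) < P := by exact_mod_cast hP
  have hle := volume_agree c hc P hP U
    (fun x => reluNet d (netA d hd0 c N) N x ⟨0, hdL⟩)
    ((LinearMap.proj (⟨0, hdL⟩ : Fin (d (N + 1))) :
      (Fin (d (N + 1)) → ℝ) →ₗ[ℝ] ℝ).toAffineMap.comp B) (by
      intro x hx
      have hx01 : ∀ i, 0 ≤ x i ∧ x i ≤ 1 := fun i => hUsub hx i (Set.mem_univ i)
      have hk : ∀ i, ∃ k : Fin P, (k : ℝ) ≤ P * x i ∧ P * x i ≤ k + 1 := by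
        intro i
        obtain ⟨k, hk, h0, h1⟩ := exists_piece P hP (P * x i)
          (mul_nonneg hP0.le (hx01 i).1) (mul_le_of_le_one_right hP0.le (hx01 i).2)
        exact ⟨⟨k, hk⟩, h0, h1⟩
      choose K hK using hk
      refine ⟨K, ⟨fun i => ?_, fun i => ?_⟩, ?_⟩
      · exact (div_le_iff₀' hP0).2 (hK i).1
      · exact (le_div_iff₀' hP0).2 (hK i).2
      · rw [reluNet_out, outFun_apply, boxMap_apply]
        refine Finset.sum_congr rfl fun i _ => ?_
        rw [(decoded_tri d hd0 c N hd x hx01 N le_rfl i).unique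
          (triRel_piece (K i) _ (hK i).1 (hK i).2)])
    (by
      intro x hx
      exact congrFun (hB x hx) ⟨0, hdL⟩)
  refine absurd hvol (not_lt.2 (hle.trans_eq ?_))
  rw [hPdef, Nat.cast_prod, Finset.prod_pow]
end

section
/- Let σ : ℝ → ℝ be a function for which there exist x₀ ∈ ℝ, δ > 0, and s₋ ≠ s₊ with σ(x₀ + u) = σ(x₀) + s₊·u for all u ∈ [0, δ] and σ(x₀ + u) = σ(x₀) + s₋·u for all u ∈ [−δ, 0]. Let n₀ ≥ 1, L ≥ 1, n_L ≥ 1, and n₁, …, n_{L−1} be integers with n_l ≥ 2n₀ for every l ∈ {1, …, L−1}, and let μ denote Lebesgue measure on ℝ^{n₀}. Then there exist affine maps A_l : ℝ^{n_{l−1}} → ℝ^{n_l} for l = 1, …, L such that the function F := A_L ∘ σ_{L−1} ∘ A_{L−1} ∘ ⋯ ∘ σ_1 ∘ A_1 — where each σ_l : ℝ^{n_l} → ℝ^{n_l} applies σ to each coordinate — satisfies: for every measurable set U ⊆ [0, 1]^{n₀} with μ(U) > ∏_{l=1}^{L−1} ⌊n_l/(2n₀)⌋^{−n₀}, there is no affine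 map A : ℝ^{n₀} → ℝ^{n_L} with F(x) = A(x) for all x ∈ U. -/
open MeasureTheory ENNReal

/-- An `(L+1)`-affine-layer network with activation `σ`:
`sigmaNet σ d A L = A_L ∘ σ ∘ A_{L-1} ∘ ⋯ ∘ σ ∘ A_0`, where `σ` is applied to each
coordinate and `A l : ℝ^{d l} → ℝ^{d (l+1)}` are affine maps. -/
noncomputable def sigmaNet (σ : ℝ → ℝ) (d : ℕ → ℕ)
    (A : ∀ l : ℕ, (Fin (d l) → ℝ) →ᵃ[ℝ] (Fin (d (l + 1)) → ℝ)) :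
    ∀ L : ℕ, (Fin (d 0) → ℝ) → (Fin (d (L + 1)) → ℝ)
  | 0 => fun x => A 0 x
  | L + 1 => fun x => A (L + 1) (fun j => σ (sigmaNet σ d A L x j))

namespace PLFine

/-- The affine form `x ↦ ∑ a i * x i + b`. -/
noncomputable def affOf {ι : Type*} [Fintype ι] (a : ι → ℝ) (b : ℝ) : (ι → ℝ) →ᵃ[ℝ] ℝ :=
  (∑ i, a i • (LinearMap.proj i : (ι → ℝ) →ₗ[ℝ] ℝ)).toAffineMap + AffineMap.const ℝ (ι → ℝ) b

lemma affOf_apply {ι : Type*} [Fintype ι] (a : ι → ℝ) (b : ℝ) (x : ι → ℝ) :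
    affOf a b x = ∑ i, a i * x i + b := by
  simp [affOf]

/-- The triangle wave of period `2`. -/
noncomputable def W (y : ℝ) : ℝ := |y - 2 * (round (y / 2) : ℤ)|

lemma W_eq (y : ℝ) (k : ℤ) (h : |y - 2 * k| ≤ 1) : W y = |y - 2 * k| := by
  have h2 : |y / 2 - round (y / 2)| ≤ 1 / 2 := abs_sub_round (y / 2)
  unfold W
  generalize round (y / 2) = m at h2 ⊢
  have e1 := abs_le.mp h
  have e2 := abs_le.mp h2
  have l1 : ((m - k : ℤ) : ℝ) ≤ 1 := by push_cast; linarith [e1.1, e1.2, e2.1, e2.2]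
  have l2 : (-1 : ℝ) ≤ ((m - k : ℤ) : ℝ) := by push_cast; linarith [e1.1, e1.2, e2.1, e2.2]
  have l1' : m - k ≤ 1 := by exact_mod_cast l1
  have l2' : -1 ≤ m - k := by exact_mod_cast l2
  obtain h | h | h : m = k ∨ m = k + 1 ∨ m = k - 1 := by omega
  · rw [h]
  · subst h
    push_cast at *
    have : y - 2 * k = 1 := by linarith [e1.1, e1.2, e2.1, e2.2]
    rw [this, show y - 2 * ((k : ℝ) + 1) = -1 by linarith]; simp
  · subst h
    push_cast at *
    have : y - 2 * k = -1 := by linarith [e1.1, e1.2, e2.1, e2.2]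
    rw [this, show y - 2 * ((k : ℝ) - 1) = 1 by linarith]; simp

lemma W_exists (y : ℝ) : ∃ k : ℤ, |y - 2 * k| ≤ 1 := by
  refine ⟨round (y / 2), ?_⟩
  have h2 : |y / 2 - round (y / 2)| ≤ 1 / 2 := abs_sub_round (y / 2)
  rw [abs_le] at *
  constructor <;> linarith [h2.1, h2.2]

lemma W_mem (y : ℝ) : W y ∈ Set.Icc (0 : ℝ) 1 := by
  obtain ⟨k, hk⟩ := W_exists y
  rw [W_eq y k hk]
  exact ⟨abs_nonneg _, hk⟩

lemma W_id (y : ℝ) (h : y ∈ Set.Icc (0 : ℝ) 1) : W y = y := by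
  rw [W_eq y 0] <;> simp [abs_of_nonneg h.1, h.2]

lemma W_even (y : ℝ) (k : ℤ) : W (2 * k + y) = W y ∧ W (2 * k - y) = W y := by
  obtain ⟨j, hj⟩ := W_exists y
  constructor
  · rw [W_eq y j hj, W_eq _ (k + j)] <;> push_cast
    · congr 1; ring
    · convert hj using 2; ring
  · have : |2 * k - y - 2 * ((k - j : ℤ) : ℝ)| = |y - 2 * j| := by
      rw [abs_sub_comm y]; congr 1; push_cast; ring
    rw [W_eq y j hj, W_eq _ (k - j)] <;> rw [this]
    exact hj

lemma W_comp (p : ℕ) (y : ℝ) : W (p * W y) = W (p * y) := by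
  obtain ⟨k, hk⟩ := W_exists y
  rw [W_eq y k hk]
  rcases abs_choice (y - 2 * k) with h | h <;> rw [h]
  · have := (W_even (p * y) (-(p * k))).1
    rw [← this]; congr 1; push_cast; ring
  · have := (W_even (p * y) (p * k)).2
    rw [← this]; congr 1; push_cast; ring

/-- slope and offset of the `k`-th linear piece of `W`. -/
def sg (k : ℕ) : ℝ := if Even k then 1 else -1
/-- offset of the `k`-th linear piece of `W`. -/
def off (k : ℕ) : ℤ := if Even k then -(k : ℤ) else (k : ℤ) + 1

lemma off_inj {k l : ℕ} (h : off k = off l) : k = l := by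
  unfold off at h
  split_ifs at h <;> omega

lemma W_piece (k : ℕ) (y : ℝ) (h1 : (k : ℝ) ≤ y) (h2 : y ≤ k + 1) :
    W y = sg k * y + off k := by
  unfold sg off
  split_ifs with h
  · obtain ⟨m, rfl⟩ := h
    push_cast at *
    have e : |y - 2 * ((m : ℤ) : ℝ)| = y - 2 * m := by
      push_cast; rw [abs_of_nonneg]; linarith
    rw [W_eq y m] <;> rw [e] <;> linarith
  · obtain ⟨m, rfl⟩ := Nat.not_even_iff_odd.mp h
    push_cast at *
    have e : |y - 2 * ((m + 1 : ℤ) : ℝ)| = 2 * m + 2 - y := by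
      push_cast; rw [abs_of_nonpos] <;> linarith
    rw [W_eq y (m + 1)] <;> rw [e] <;> linarith

/-- coefficients of the wave in terms of ramps. -/
def co (j : ℕ) : ℝ := if j = 0 then 1 else 2 * sg j

lemma ramp_sum (p : ℕ) : (∀ y : ℝ, 0 ≤ y → y ≤ p + 1 →
      ∑ j ∈ Finset.range (p + 1), co j * max (y - j) 0 = W y) ∧
    (∀ y : ℝ, p ≤ y → ∑ j ∈ Finset.range (p + 1), co j * max (y - j) 0 = sg p * y + off p) := by
  induction p with
  | zero =>
    constructor
    · intro y h1 h2
      rw [W_id y ⟨h1, by simpa using h2⟩]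
      simp [co, h1]
    · intro y h1
      have : 0 ≤ y := by simpa using h1
      simp [co, sg, off, this]
  | succ p ih =>
    have key : ∀ y : ℝ, ((p + 1 : ℕ) : ℝ) ≤ y →
        ∑ j ∈ Finset.range (p + 1 + 1), co j * max (y - j) 0
          = sg (p + 1) * y + off (p + 1) := by
      intro y hy
      rw [Finset.sum_range_succ, ih.2 y (by push_cast at hy; linarith),
        max_eq_left (by linarith)]
      simp only [co, sg, off, Nat.even_add_one]
      split_ifs <;> push_cast <;> first | (exfalso; omega) | ring
    refine ⟨fun y h1 h2 => ?_, key⟩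
    by_cases h : y ≤ ((p + 1 : ℕ) : ℝ)
    · rw [Finset.sum_range_succ, ih.1 y h1 (by push_cast at h; linarith),
        max_eq_right (by linarith)]
      simp
    · rw [key y (not_le.mp h).le, W_piece (p + 1) y (not_le.mp h).le h2]

lemma tri_ramp (p : ℕ) (hp : 1 ≤ p) (t : ℝ) (ht : t ∈ Set.Icc (0 : ℝ) 1) :
    W (p * t) = ∑ j : Fin p, (p * co j) * max (t - (j : ℝ) / p) 0 := by
  obtain ⟨q, rfl⟩ : ∃ q, p = q + 1 := ⟨p - 1, by omega⟩
  have hpos : (0 : ℝ) < ((q + 1 : ℕ) : ℝ) := by positivity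
  rw [← (ramp_sum q).1 _ (mul_nonneg hpos.le ht.1)
    (by have := mul_le_mul_of_nonneg_left ht.2 hpos.le; push_cast at *; linarith),
    Finset.sum_range]
  refine Finset.sum_congr rfl fun j _ => ?_
  have : ((q + 1 : ℕ) : ℝ) * t - j = ((q + 1 : ℕ) : ℝ) * (t - (j : ℝ) / ((q + 1 : ℕ) : ℝ)) := by
    field_simp
  rw [this, show (0 : ℝ) = ((q + 1 : ℕ) : ℝ) * 0 by simp, ← mul_max_of_nonneg _ _ hpos.le]
  ring_nf

/-- A ramp is a combination of two units. -/
lemma ramp_rep (σ : ℝ → ℝ) (x₀ δ sminus splus : ℝ) (hδ : 0 < δ) (hs : sminus ≠ splus)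
    (hplus : ∀ u ∈ Set.Icc (0 : ℝ) δ, σ (x₀ + u) = σ x₀ + splus * u)
    (hminus : ∀ u ∈ Set.Icc (-δ) (0 : ℝ), σ (x₀ + u) = σ x₀ + sminus * u)
    (β : ℝ) (hβ : β ∈ Set.Icc (0 : ℝ) 1) :
    ∃ (w b c : Fin 2 → ℝ) (c0 : ℝ), ∀ t ∈ Set.Icc (0 : ℝ) 1,
      max (t - β) 0 = c0 + ∑ k, c k * σ (w k * t + b k) := by
  have hlin : ∃ w c c0 : ℝ, ∀ t ∈ Set.Icc (0 : ℝ) 1, t = c0 + c * σ (w * t + x₀) := by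
    by_cases h : splus = 0
    · have h' : sminus ≠ 0 := by rwa [h] at hs
      refine ⟨-δ, -(sminus * δ)⁻¹, (sminus * δ)⁻¹ * σ x₀, fun t ht => ?_⟩
      rw [add_comm (-δ * t), hminus _ ⟨by nlinarith [ht.2], by nlinarith [ht.1]⟩]
      field_simp
      ring
    · refine ⟨δ, (splus * δ)⁻¹, -(splus * δ)⁻¹ * σ x₀, fun t ht => ?_⟩
      rw [add_comm (δ * t), hplus _ ⟨by nlinarith [ht.1], by nlinarith [ht.2]⟩]
      field_simp
      ring
  obtain ⟨w, c, c0, hl⟩ := hlin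
  have hd : splus - sminus ≠ 0 := sub_ne_zero.mpr hs.symm
  set D := (splus - sminus) * δ with hD
  have hD0 : D ≠ 0 := mul_ne_zero hd hδ.ne'
  refine ⟨![δ, w], ![x₀ - δ * β, x₀], ![D⁻¹, -D⁻¹ * (sminus * δ) * c],
    D⁻¹ * (-σ x₀ + sminus * δ * β) - D⁻¹ * (sminus * δ) * c0, fun t ht => ?_⟩
  have e : σ (δ * t + (x₀ - δ * β)) = σ x₀ + sminus * δ * (t - β) + D * max (t - β) 0 := by
    rw [show δ * t + (x₀ - δ * β) = x₀ + δ * (t - β) by ring]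
    rcases le_total β t with h | h
    · rw [hplus _ ⟨by nlinarith, by nlinarith [ht.2, hβ.1]⟩, max_eq_left (by linarith), hD]
      ring
    · rw [hminus _ ⟨by nlinarith [ht.1, hβ.2], by nlinarith⟩, max_eq_right (by linarith)]
      ring
  simp only [Fin.sum_univ_two, Matrix.cons_val_zero, Matrix.cons_val_one]
  rw [e]
  have h2 : c * σ (w * t + x₀) = t - c0 := by linarith [hl t ht]
  rw [show -D⁻¹ * (sminus * δ) * c * σ (w * t + x₀)
    = -D⁻¹ * (sminus * δ) * (c * σ (w * t + x₀)) by ring, h2]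
  field_simp
  ring

/-- One folding layer. -/
lemma layer (σ : ℝ → ℝ) (x₀ δ sminus splus : ℝ) (hδ : 0 < δ) (hs : sminus ≠ splus)
    (hplus : ∀ u ∈ Set.Icc (0 : ℝ) δ, σ (x₀ + u) = σ x₀ + splus * u)
    (hminus : ∀ u ∈ Set.Icc (-δ) (0 : ℝ), σ (x₀ + u) = σ x₀ + sminus * u)
    (n m p : ℕ) (hp : 1 ≤ p) (hm : n * (p * 2) ≤ m) :
    ∃ (A : (Fin n → ℝ) →ᵃ[ℝ] (Fin m → ℝ)) (C : (Fin m → ℝ) →ᵃ[ℝ] (Fin n → ℝ)),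
      ∀ t : Fin n → ℝ, (∀ i, t i ∈ Set.Icc (0 : ℝ) 1) →
        C (fun j => σ (A t j)) = fun i => W (p * t i) := by
  have hp0 : (0 : ℝ) < p := by exact_mod_cast hp
  have hr := fun j : Fin p => ramp_rep σ x₀ δ sminus splus hδ hs hplus hminus ((j : ℝ) / p)
    ⟨by positivity, by
      rw [div_le_one hp0]; exact_mod_cast j.2.le⟩
  choose w b c c0 h using hr
  obtain ⟨e⟩ : Nonempty ((Fin n × (Fin p × Fin 2)) ↪ Fin m) := by
    apply Function.Embedding.nonempty_of_card_le
    simpa using hm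
  refine ⟨AffineMap.pi (Function.extend e
      (fun v => affOf (Pi.single v.1 (w v.2.1 v.2.2)) (b v.2.1 v.2.2)) 0),
    AffineMap.pi (fun i => affOf
      (Function.extend e (fun v => if v.1 = i then (p * co v.2.1) * c v.2.1 v.2.2 else 0) 0)
      (∑ j : Fin p, (p * co j) * c0 j)), fun t ht => ?_⟩
  ext i
  rw [AffineMap.pi_apply, affOf_apply, tri_ramp p hp _ (ht i)]
  have hsum : ∀ g : Fin m → ℝ, (∀ r, r ∉ Set.range e → g r = 0) →
      ∑ r, g r = ∑ v, g (e v) := by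
    intro g hg
    exact (Finset.sum_of_injOn e e.injective.injOn (by simp)
      (fun r _ hr => hg r (by simpa using hr)) (fun _ _ => rfl)).symm
  rw [hsum]
  · simp only [e.injective.extend_apply, AffineMap.pi_apply, affOf_apply]
    rw [Fintype.sum_prod_type, Finset.sum_eq_single i, Fintype.sum_prod_type,
      ← Finset.sum_add_distrib]
    · refine Finset.sum_congr rfl fun j _ => ?_
      rw [h j _ (ht i)]
      simp only [if_true, Pi.single_apply, ite_mul, zero_mul, Finset.sum_ite_eq',
        Finset.mem_univ]
      rw [mul_add, Finset.mul_sum, add_comm]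
      congr 1
      exact Finset.sum_congr rfl fun k _ => by ring
    · intro i' _ hi'
      simp [hi']
    · simp
  · intro r hr
    rw [Function.extend_apply' _ _ _ (by simpa using hr)]
    simp

lemma sigmaNet_congr (σ : ℝ → ℝ) (d : ℕ → ℕ)
    (A A' : ∀ l : ℕ, (Fin (d l) → ℝ) →ᵃ[ℝ] (Fin (d (l + 1)) → ℝ)) (L : ℕ)
    (h : ∀ l ≤ L, A l = A' l) : sigmaNet σ d A L = sigmaNet σ d A' L := by
  induction L with
  | zero => funext x; simp [sigmaNet, h 0 le_rfl]
  | succ L ih =>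
    funext x
    simp [sigmaNet, h (L + 1) le_rfl, ih fun l hl => h l (by omega)]

lemma net (σ : ℝ → ℝ) (x₀ δ sminus splus : ℝ) (hδ : 0 < δ) (hs : sminus ≠ splus)
    (hplus : ∀ u ∈ Set.Icc (0 : ℝ) δ, σ (x₀ + u) = σ x₀ + splus * u)
    (hminus : ∀ u ∈ Set.Icc (-δ) (0 : ℝ), σ (x₀ + u) = σ x₀ + sminus * u)
    (d : ℕ → ℕ) (hd0 : 1 ≤ d 0) (L : ℕ)
    (hd : ∀ l, 1 ≤ l → l ≤ L → 2 * d 0 ≤ d l)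
    (A' : (Fin (d 0) → ℝ) →ᵃ[ℝ] (Fin (d (L + 1)) → ℝ)) :
    ∃ A : ∀ l : ℕ, (Fin (d l) → ℝ) →ᵃ[ℝ] (Fin (d (l + 1)) → ℝ),
      ∀ x : Fin (d 0) → ℝ, (∀ i, x i ∈ Set.Icc (0 : ℝ) 1) →
        sigmaNet σ d A L x =
          A' (fun i => W ((∏ l ∈ Finset.Icc 1 L, (d l / (2 * d 0)) : ℕ) * x i)) := by
  induction L with
  | zero =>
    refine ⟨Function.update (fun l => AffineMap.const ℝ _ 0) 0 A', fun x hx => ?_⟩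
    simp [sigmaNet, W_id _ (hx _)]
  | succ L ih =>
    set p := d (L + 1) / (2 * d 0) with hpdef
    have hp : 1 ≤ p := by
      rw [hpdef, Nat.one_le_div_iff (by omega)]
      exact hd _ (by omega) le_rfl
    have hm : d 0 * (p * 2) ≤ d (L + 1) := by
      have := Nat.div_mul_le_self (d (L + 1)) (2 * d 0)
      rw [← hpdef] at this
      calc _ = p * (2 * d 0) := by ring
        _ ≤ _ := this
    obtain ⟨A1, C, hC⟩ := layer σ x₀ δ sminus splus hδ hs hplus hminus _ _ p hp hm
    obtain ⟨A, hA⟩ := ih (fun l h1 h2 => hd l h1 (by omega)) A1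
    refine ⟨Function.update A (L + 1) (A'.comp C), fun x hx => ?_⟩
    have h1 : sigmaNet σ d (Function.update A (L + 1) (A'.comp C)) L = sigmaNet σ d A L :=
      sigmaNet_congr _ _ _ _ _ fun l hl => Function.update_of_ne (by omega) _ _
    simp only [sigmaNet, h1, Function.update_self, AffineMap.comp_apply]
    rw [hA x hx, hC _ (fun i => W_mem _)]
    congr 1
    funext i
    rw [W_comp, Finset.prod_Icc_succ_top (by omega)]
    push_cast
    congr 1
    ring

lemma null_zero {n : ℕ} (f : (Fin n → ℝ) →ᵃ[ℝ] ℝ) (hf : ∃ x, f x ≠ 0) :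
    volume {x | f x = 0} = 0 := by
  have := Measure.addHaar_affineSubspace (volume : Measure (Fin n → ℝ))
    ((AffineSubspace.mk' (0 : ℝ) ⊥).comap f) (by
      obtain ⟨x, hx⟩ := hf
      intro h
      have : x ∈ (AffineSubspace.mk' (0 : ℝ) ⊥).comap f := by rw [h]; trivial
      simp at this
      exact hx this)
  convert this using 2
  ext x
  simp

lemma exists_coeffs (n : ℕ) : ∃ c : Fin n → ℝ, ∀ e e' : Fin n → ℤ,
    ∑ i, c i * e i = ∑ i, c i * e' i → e = e' := by
  have ht : Transcendental ℤ (liouvilleNumber 2) := by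
    have := transcendental_liouvilleNumber (m := 2) le_rfl
    exact_mod_cast this
  refine ⟨fun i => liouvilleNumber 2 ^ (i : ℕ), fun e e' h => ?_⟩
  rw [transcendental_iff] at ht
  have h0 := ht (∑ i : Fin n, Polynomial.monomial (i : ℕ) (e i - e' i)) (by
    simp only [map_sum, Polynomial.aeval_monomial]
    rw [← sub_eq_zero, ← Finset.sum_sub_distrib] at h
    rw [← h]
    refine Finset.sum_congr rfl fun i _ => ?_
    simp; ring)
  funext i
  have := congrArg (fun q => Polynomial.coeff q (i : ℕ)) h0
  simp [Polynomial.finsetSum_coeff, Polynomial.coeff_monomial, Fin.val_inj] at this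
  omega

lemma measure_bound (n P : ℕ) (hP : 1 ≤ P) (c : Fin n → ℝ)
    (hc : ∀ e e' : Fin n → ℤ, ∑ i, c i * e i = ∑ i, c i * e' i → e = e')
    (B : (Fin n → ℝ) →ᵃ[ℝ] ℝ) (U : Set (Fin n → ℝ))
    (hU : ∀ x ∈ U, ∀ i, x i ∈ Set.Icc (0 : ℝ) 1)
    (h : ∀ x ∈ U, ∑ i, c i * W (P * x i) = B x) : volume U ≤ ((P : ℝ≥0∞) ^ n)⁻¹ := by
  have hP0 : (0 : ℝ) < P := by exact_mod_cast hP
  let G : (Fin n → Fin P) → ((Fin n → ℝ) →ᵃ[ℝ] ℝ) := fun κ =>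
    affOf (fun i => c i * (sg (κ i) * P)) (∑ i, c i * off (κ i))
  let Q : (Fin n → Fin P) → Set (Fin n → ℝ) := fun κ =>
    Set.pi Set.univ fun i => Set.Icc ((κ i : ℝ) / P) (((κ i : ℝ) + 1) / P)
  have hcell : ∀ x ∈ U, ∃ κ, x ∈ Q κ := by
    intro x hx
    have : ∀ i, ∃ k : Fin P, x i ∈ Set.Icc ((k : ℝ) / P) (((k : ℝ) + 1) / P) := by
      intro i
      obtain ⟨h0, h1⟩ := hU x hx i
      rcases h1.lt_or_eq with h1 | h1
      · have hnn : 0 ≤ P * x i := mul_nonneg hP0.le h0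
        refine ⟨⟨⌊P * x i⌋₊, ?_⟩, ?_, ?_⟩
        · rw [Nat.floor_lt hnn]; nlinarith
        · rw [div_le_iff₀ hP0]; linarith [Nat.floor_le hnn]
        · rw [le_div_iff₀ hP0]; linarith [Nat.lt_floor_add_one (P * x i)]
      · refine ⟨⟨P - 1, by omega⟩, ?_, ?_⟩
        · rw [h1, div_le_one hP0]; exact_mod_cast Nat.sub_le _ _
        · rw [h1, le_div_iff₀ hP0]
          push_cast [Nat.cast_sub hP]; linarith
    choose κ hκ using this
    exact ⟨κ, fun i _ => hκ i⟩
  have hGQ : ∀ κ, ∀ x ∈ Q κ, ∑ i, c i * W (P * x i) = G κ x := by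
    intro κ x hx
    simp only [G, affOf_apply]
    rw [← Finset.sum_add_distrib]
    refine Finset.sum_congr rfl fun i _ => ?_
    obtain ⟨h1, h2⟩ := hx i trivial
    rw [div_le_iff₀ hP0] at h1
    rw [le_div_iff₀ hP0] at h2
    rw [W_piece (κ i) (P * x i) (by linarith) (by linarith)]
    ring
  have hinj : ∀ κ κ', G κ = G κ' → κ = κ' := by
    intro κ κ' hk
    have h0 := congrArg (fun f => f 0) hk
    simp only [G, affOf_apply, Pi.zero_apply, mul_zero, Finset.sum_const_zero, zero_add] at h0
    have := hc _ _ h0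
    funext i
    exact Fin.ext (off_inj (congrFun this i))
  have hN : volume (⋃ κ ∈ {κ | G κ ≠ B}, {x | (G κ - B) x = 0}) = 0 := by
    rw [measure_biUnion_null_iff (Set.to_countable _)]
    intro κ hκ
    apply null_zero
    by_contra hcon
    push Not at hcon
    apply hκ
    ext x
    have := hcon x
    simpa [sub_eq_zero] using this
  have hQ : ∀ κ, volume (Q κ) = ((P : ℝ≥0∞) ^ n)⁻¹ := by
    intro κ
    simp only [Q, volume_pi_pi, Real.volume_Icc]
    have : ∀ i, ((κ i : ℝ) + 1) / P - (κ i : ℝ) / P = (P : ℝ)⁻¹ := by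
      intro i; field_simp; ring
    simp only [this, Finset.prod_const, Finset.card_univ, Fintype.card_fin]
    rw [ENNReal.ofReal_inv_of_pos hP0, ENNReal.ofReal_natCast, ENNReal.inv_pow]
  by_cases hex : ∃ κ, G κ = B
  · obtain ⟨κ, hκ⟩ := hex
    calc volume U ≤ volume (Q κ ∪ ⋃ κ ∈ {κ | G κ ≠ B}, {x | (G κ - B) x = 0}) := by
          apply measure_mono
          intro x hx
          obtain ⟨κ', hx'⟩ := hcell x hx
          by_cases he : κ' = κ
          · left; rwa [← he]
          · right
            simp only [Set.mem_iUnion]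
            refine ⟨κ', fun h' => he (hinj _ _ (h'.trans hκ.symm)), ?_⟩
            simp [← hGQ κ' x hx', h x hx]
      _ ≤ volume (Q κ) + 0 := by
          rw [← hN]; exact measure_union_le _ _
      _ = _ := by rw [add_zero, hQ]
  · push Not at hex
    calc volume U ≤ volume (⋃ κ ∈ {κ | G κ ≠ B}, {x | (G κ - B) x = 0}) := by
          apply measure_mono
          intro x hx
          obtain ⟨κ', hx'⟩ := hcell x hx
          simp only [Set.mem_iUnion]
          refine ⟨κ', hex κ', ?_⟩
          simp [← hGQ κ' x hx', h x hx]
      _ = 0 := hN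
      _ ≤ _ := zero_le

end PLFine

/-- **Theorem 1**: for any activation `σ` having a breakpoint (affine with distinct slopes
on the two sides of `x₀`), there is a choice of affine layers of an `L`-layer network with
`d l ≥ 2·(d 0)` units at the `l`-th layer (`1 ≤ l ≤ L−1`) whose fineness of linear regions
is at most `∏_{l=1}^{L−1} ⌊d l / (2·d 0)⌋^{−d 0}`: the network agrees with no affine map on
any measurable subset of `[0,1]^{d 0}` of measure exceeding this bound. -/
theorem piecewise_linear_network_fineness
    (σ : ℝ → ℝ) (x₀ δ sminus splus : ℝ) (hδ : 0 < δ) (hs : sminus ≠ splus)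
    (hplus : ∀ u ∈ Set.Icc (0 : ℝ) δ, σ (x₀ + u) = σ x₀ + splus * u)
    (hminus : ∀ u ∈ Set.Icc (-δ) (0 : ℝ), σ (x₀ + u) = σ x₀ + sminus * u)
    (L : ℕ) (hL : 1 ≤ L) (d : ℕ → ℕ)
    (hd0 : 1 ≤ d 0) (hdL : 1 ≤ d L)
    (hd : ∀ l, 1 ≤ l → l ≤ L - 1 → 2 * d 0 ≤ d l) :
    ∃ A : ∀ l : ℕ, (Fin (d l) → ℝ) →ᵃ[ℝ] (Fin (d (l + 1)) → ℝ),
      ∀ U : Set (Fin (d 0) → ℝ), U ⊆ Set.pi Set.univ (fun _ => Set.Icc (0 : ℝ) 1) →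
        MeasurableSet U →
        (∏ l ∈ Finset.Icc 1 (L - 1), ((d l / (2 * d 0) : ℕ) : ℝ≥0∞) ^ (d 0))⁻¹ < volume U →
        ¬ ∃ B : (Fin (d 0) → ℝ) →ᵃ[ℝ] (Fin (d (L - 1 + 1)) → ℝ),
            ∀ x ∈ U, sigmaNet σ d A (L - 1) x = B x := by
  obtain ⟨m, rfl⟩ : ∃ m, L = m + 1 := ⟨L - 1, by omega⟩
  simp only [Nat.add_sub_cancel] at hd ⊢
  obtain ⟨c, hc⟩ := PLFine.exists_coeffs (d 0)
  obtain ⟨A, hA⟩ := PLFine.net σ x₀ δ sminus splus hδ hs hplus hminus d hd0 m hd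
    (AffineMap.pi fun _ => PLFine.affOf c 0)
  refine ⟨A, fun U hU _ hvol hB => ?_⟩
  obtain ⟨B, hB⟩ := hB
  have hU' : ∀ x ∈ U, ∀ i, x i ∈ Set.Icc (0 : ℝ) 1 := fun x hx i => hU hx i trivial
  refine absurd hvol (not_lt.mpr ?_)
  have key := PLFine.measure_bound (d 0) (∏ l ∈ Finset.Icc 1 m, (d l / (2 * d 0))) ?_ c hc
    ((AffineMap.proj (⟨0, hdL⟩ : Fin (d (m + 1)))).comp B) U hU' ?_
  · rw [Finset.prod_pow, ← Nat.cast_prod]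
    exact key
  · refine Finset.one_le_prod' fun l hl => ?_
    rw [Finset.mem_Icc] at hl
    rw [Nat.one_le_div_iff (by omega)]
    exact hd l hl.1 hl.2
  · intro x hx
    have := congrFun ((hA x (hU' x hx)).symm.trans (hB x hx)) ⟨0, hdL⟩
    rw [AffineMap.pi_apply, PLFine.affOf_apply, add_zero] at this
    exact this
end
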